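/- Let G be an edge-colored graph with d^c(v) ≥ k for every vertex v, let t be the maximum length of a rainbow path in G, and let CL = u_0 u_1 … u_t u_0 be a rainbow cycle of length t+1 in G with t+1 ≤ ⌈3k/5⌉. Let U_0 = U_1 ∪ U_2, where U_1 = {color(u_i, u_{i+1}) : 0 ≤ i ≤ ⌈k/5⌉ − 1} and U_2 = {color(u_i, u_{i+1}) : (t+1) − ⌈k/5⌉ ≤ i ≤ t−1} ∪ {color(u_t, u_0)}. Then for every vertex z of G not on CL with (u_0, z) ∈ E(G), the color of the edge (u_0, z) does not belong to U_0. -/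

import Mathlib

/-!
Write `n = t + 1` for the length of the cycle and suppose that the edge `u₀z` has the color of
the `i`-th cycle edge `u_i u_{i+1}`, where `i < ⌈k/5⌉`.

The key point (`exists_outside_path`) is that a long rainbow path can be grown from `z` which avoids
both the vertices and the colors of the cycle. Let `w` be its current end and `m` its current length.
Among the at least `k` colors at `w`, at most `n` are colors of the cycle, `m` are colors of the
path, and `m` occur on edges from `w` back to the path. So if `n + 2m < k`, some edge `wx`
avoids all of these. The vertex `x` is not on the cycle, since otherwise the path, the edge `wx` and
then `t` edges of the cycle would form a rainbow path of length greater than `t`. So the path extends.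

Taking an outside path of length `i` ending in `z`, then `u₀`, then `u_t, …, u_{i+1}` gives a
rainbow path of length `t + 1`: the arc misses the `i`-th cycle edge, whose color is the one of
`zu₀`. This contradicts maximality (`color_ne_of_index_small`). The colors of the last edges of the
cycle are handled by reversing the cycle. Finally an index `i > t` is impossible when `i < ⌈k/5⌉`,
because an outside path of length `t + 1` would then exist.
-/


open SimpleGraph

/-- The color degree of a vertex `v`: the number of distinct colors appearing on
edges incident to `v`. -/
noncomputable def colorDegree {V : Type*} (G : SimpleGraph V) (c : Sym2 V → ℕ) (v : V) : ℕ :=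
  (c '' G.incidenceSet v).ncard

/-- A rainbow path: a path all of whose edges have pairwise distinct colors. -/
def IsRainbowPath {V : Type*} (G : SimpleGraph V) (c : Sym2 V → ℕ) {u v : V}
    (p : G.Walk u v) : Prop :=
  p.IsPath ∧ (p.edges.map c).Nodup

/-- A rainbow cycle: a cycle all of whose edges have pairwise distinct colors. -/
def IsRainbowCycle {V : Type*} (G : SimpleGraph V) (c : Sym2 V → ℕ) {u : V}
    (p : G.Walk u u) : Prop :=
  p.IsCycle ∧ (p.edges.map c).Nodup

/-- Two disjoint rainbow paths with disjoint colors, joined by an edge of a further color, form a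
rainbow path. -/
lemma rainbow_join {V : Type*} {G : SimpleGraph V} {c : Sym2 V → ℕ} {a b d e : V}
    {p : G.Walk a b} {q : G.Walk d e} (hp : IsRainbowPath G c p) (hq : IsRainbowPath G c q)
    (h : G.Adj b d) (hs : ∀ x ∈ p.support, x ∉ q.support)
    (hc : ∀ x ∈ p.edges.map c, x ∉ q.edges.map c)
    (h1 : c s(b, d) ∉ p.edges.map c) (h2 : c s(b, d) ∉ q.edges.map c) :
    ∃ r : G.Walk a e, IsRainbowPath G c r ∧ r.length = p.length + 1 + q.length := by
  refine ⟨p.append (Walk.cons h q), ⟨?_, ?_⟩, ?_⟩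
  · rw [Walk.isPath_def, Walk.support_append, Walk.support_cons, List.tail_cons, List.nodup_append]
    refine ⟨hp.1.support_nodup, hq.1.support_nodup, ?_⟩
    rintro x hx y hy rfl
    exact hs x hx hy
  · rw [Walk.edges_append, Walk.edges_cons, List.map_append, List.map_cons, List.nodup_append]
    refine ⟨hp.2, List.nodup_cons.2 ⟨h2, hq.2⟩, ?_⟩
    rintro x hx y hy rfl
    rcases List.mem_cons.1 hy with rfl | hy
    · exact h1 hx
    · exact hc x hx hy
  · rw [Walk.length_append, Walk.length_cons]
    omega

/-- A suffix of a rainbow cycle that omits at least the first edge, traversed backwards, is a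
rainbow path. -/
lemma rainbow_arc {V : Type*} {G : SimpleGraph V} {c : Sym2 V → ℕ} {u : V}
    {C : G.Walk u u} (hC : IsRainbowCycle G c C) (i : ℕ) :
    IsRainbowPath G c (C.drop (i + 1)).reverse := by
  refine ⟨?_, ?_⟩
  · apply Walk.IsPath.reverse
    rw [Walk.isPath_def]
    cases C with
    | nil => exact absurd hC.1 Walk.not_isCycle_nil
    | cons h0 p =>
      have : p.IsPath := ((Walk.cons_isCycle_iff _ _).1 hC.1).1
      simpa [Walk.drop] using (this.drop i).support_nodup
  · rw [Walk.edges_reverse, List.map_reverse, List.nodup_reverse, Walk.edges_drop]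
    exact hC.2.sublist ((List.drop_sublist _ _).map c)

/-- Growing, from a vertex `z` off the cycle, a rainbow path of length `m` that avoids the vertices
and the colors of a rainbow cycle of length `t + 1`; the path is oriented towards `z`. -/
lemma exists_outside_path {V : Type*} [Fintype V]
    {G : SimpleGraph V} {c : Sym2 V → ℕ} {k t : ℕ}
    (hdeg : ∀ v : V, k ≤ colorDegree G c v)
    (hmax : ∀ (a b : V) (p : G.Walk a b), IsRainbowPath G c p → p.length ≤ t)
    {u : V} {C : G.Walk u u} (hC : IsRainbowCycle G c C)
    (hlen : C.length = t + 1) {z : V} (hz : z ∉ C.support) (m : ℕ)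
    (hm : m = 0 ∨ t + 1 + 2 * (m - 1) < k) :
    ∃ (w : V) (p : G.Walk w z), IsRainbowPath G c p ∧ p.length = m ∧
      (∀ x ∈ p.support, x ∉ C.support) ∧ (∀ x ∈ p.edges.map c, x ∉ C.edges.map c) := by
  classical
  induction m with
  | zero => exact ⟨z, Walk.nil, ⟨by simp, by simp⟩, by simp, by simpa using hz, by simp⟩
  | succ m ih =>
    have hm' : t + 1 + 2 * m < k := by simpa using hm
    obtain ⟨w, p, hp, hpl, hps, hpc⟩ := ih (Or.inr (by omega))
    -- The colors to avoid: those of the cycle, of the path, and of edges back to the path.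
    let B : Finset ℕ := (C.edges.map c).toFinset ∪ (p.edges.map c).toFinset ∪
      (p.support.tail.map fun x => c s(w, x)).toFinset
    have hB : B.card ≤ t + 1 + 2 * m := by
      have h1 := List.toFinset_card_le (C.edges.map c)
      have h2 := List.toFinset_card_le (p.edges.map c)
      have h3 := List.toFinset_card_le (p.support.tail.map fun x => c s(w, x))
      have h4 := Finset.card_union_le ((C.edges.map c).toFinset ∪ (p.edges.map c).toFinset)
        (p.support.tail.map fun x => c s(w, x)).toFinset
      have h5 := Finset.card_union_le (C.edges.map c).toFinset (p.edges.map c).toFinset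
      simp only [List.length_map, Walk.length_edges, List.length_tail, Walk.length_support]
        at h1 h2 h3
      change ((_ ∪ _) ∪ _ : Finset ℕ).card ≤ _
      omega
    have hex : ∃ x, G.Adj w x ∧ c s(w, x) ∉ B := by
      by_contra! hcon
      have hsub : c '' G.incidenceSet w ⊆ (B : Set ℕ) := by
        rintro _ ⟨e, he, rfl⟩
        obtain ⟨x, rfl⟩ := Sym2.mem_iff_exists.1 he.2
        exact hcon x he.1
      have h1 := Set.ncard_le_ncard hsub B.finite_toSet
      rw [Set.ncard_coe_finset] at h1
      have h2 := hdeg w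
      unfold colorDegree at h2
      omega
    obtain ⟨x, hwx, hxB⟩ := hex
    simp only [B, Finset.mem_union, List.mem_toFinset, not_or] at hxB
    obtain ⟨⟨hxC, hxp⟩, hxs⟩ := hxB
    have hxsupp : x ∉ p.support := by
      intro hx
      rw [Walk.mem_support_iff] at hx
      rcases hx with rfl | hx
      · exact hwx.ne rfl
      · exact hxs (List.mem_map.2 ⟨x, hx, rfl⟩)
    have hxcyc : x ∉ C.support := by
      intro hx
      -- The cycle, re-based at `x` and stripped of one edge, would extend the path too far.
      have hrot : (C.rotate x hx).edges.Perm C.edges := (C.rotate_edges x hx).perm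
      have hR : IsRainbowCycle G c (C.rotate x hx) :=
        ⟨hC.1.rotate hx, (hrot.map c).nodup_iff.2 hC.2⟩
      have hRl : (C.rotate x hx).length = t + 1 := by
        rw [← Walk.length_edges, hrot.length_eq, Walk.length_edges, hlen]
      have harc := rainbow_arc hR 0
      have hcol : ∀ y ∈ ((C.rotate x hx).drop 1).reverse.edges.map c, y ∈ C.edges.map c := by
        intro y hy
        rw [Walk.edges_reverse, List.map_reverse, List.mem_reverse, Walk.edges_drop] at hy
        exact (hrot.map c).mem_iff.1 (((List.drop_sublist _ _).map c).subset hy)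
      have hsup : ∀ y ∈ ((C.rotate x hx).drop 1).reverse.support, y ∈ C.support := by
        intro y hy
        rw [Walk.support_reverse, List.mem_reverse] at hy
        have := (Walk.isSubwalk_drop _ _).support_subset hy
        simpa using this
      obtain ⟨r, hr, hrl⟩ := rainbow_join (p := p.reverse)
        ⟨hp.1.reverse, by
          rw [Walk.edges_reverse, List.map_reverse, List.nodup_reverse]; exact hp.2⟩
        harc hwx
        (fun y hy hy' => hps y (by simpa using hy) (hsup y hy'))
        (fun y hy hy' => hpc y (by simpa using hy) (hcol y hy'))
        (by simpa using hxp) (fun h => hxC (hcol _ h))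
      have := hmax _ _ r hr
      simp only [Walk.length_reverse, Walk.drop_length] at hrl
      omega
    refine ⟨x, Walk.cons hwx.symm p, ⟨hp.1.cons hxsupp, ?_⟩, by simp [hpl], ?_, ?_⟩
    · rw [Walk.edges_cons, List.map_cons, Sym2.eq_swap]
      exact List.nodup_cons.2 ⟨hxp, hp.2⟩
    · intro y hy
      rw [Walk.support_cons] at hy
      rcases List.mem_cons.1 hy with rfl | hy
      · exact hxcyc
      · exact hps y hy
    · intro y hy
      rw [Walk.edges_cons, List.map_cons, Sym2.eq_swap] at hy
      rcases List.mem_cons.1 hy with rfl | hy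
      · exact hxC
      · exact hpc y hy

/-- The base-to-`z` edge does not have the color of the `i`-th cycle edge if `i` is small compared
to `k - (t + 1)`. -/
lemma color_ne_of_index_small {V : Type*} [Fintype V]
    {G : SimpleGraph V} {c : Sym2 V → ℕ} {k t : ℕ}
    (hdeg : ∀ v : V, k ≤ colorDegree G c v)
    (hmax : ∀ (a b : V) (p : G.Walk a b), IsRainbowPath G c p → p.length ≤ t)
    {u : V} {C : G.Walk u u} (hC : IsRainbowCycle G c C)
    (hlen : C.length = t + 1) {z : V} (hz : z ∉ C.support) (huz : G.Adj u z) {i : ℕ}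
    (hit : i ≤ t) (hi : i = 0 ∨ t + 1 + 2 * (i - 1) < k) :
    c s(u, z) ≠ c s(C.getVert i, C.getVert (i + 1)) := by
  intro heq
  obtain ⟨w, p, hp, hpl, hps, hpc⟩ := exists_outside_path hdeg hmax hC hlen hz i hi
  have hil : i < C.edges.length := by rw [Walk.length_edges]; omega
  have hedge : s(C.getVert i, C.getVert (i + 1)) = C.edges[i] := by
    rw [Walk.getElem_edges]
  have hcol : ∀ y ∈ (C.drop (i + 1)).reverse.edges.map c, y ∈ (C.edges.map c).drop (i + 1) := by
    intro y hy
    rw [Walk.edges_reverse, List.map_reverse, List.mem_reverse, Walk.edges_drop,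
      List.map_drop] at hy
    exact hy
  have hin : c s(z, u) = c C.edges[i] := by rw [Sym2.eq_swap, heq, hedge]
  have hinC : c s(z, u) ∈ C.edges.map c := by
    rw [hin]; exact List.mem_map.2 ⟨_, List.getElem_mem hil, rfl⟩
  obtain ⟨r, hr, hrl⟩ := rainbow_join hp (rainbow_arc hC i) huz.symm
    (fun y hy hy' => hps y hy (by
      rw [Walk.support_reverse, List.mem_reverse] at hy'
      exact (Walk.isSubwalk_drop _ _).support_subset hy'))
    (fun y hy hy' => hpc y hy (List.mem_of_mem_drop (hcol y hy')))
    (fun h => hpc _ h hinC)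
    (fun h => by
      have h' := hcol _ h
      obtain ⟨j, hj, hj'⟩ := List.mem_iff_getElem.1 h'
      rw [List.getElem_drop, hin, ← List.getElem_map c (h := by simpa using hil)] at hj'
      have := (hC.2.getElem_inj_iff).1 hj'
      omega)
  have := hmax _ _ r hr
  simp only [Walk.length_reverse, Walk.drop_length] at hrl
  omega

theorem color_from_u0_avoids_U0 {V : Type*} [Fintype V]
    (G : SimpleGraph V) (c : Sym2 V → ℕ) (k t : ℕ)
    (hdeg : ∀ v : V, k ≤ colorDegree G c v)
    (hex : ∃ (a b : V) (p : G.Walk a b), IsRainbowPath G c p ∧ p.length = t)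
    (hmax : ∀ (a b : V) (p : G.Walk a b), IsRainbowPath G c p → p.length ≤ t)
    {u : V} (cyc : G.Walk u u) (hcyc : IsRainbowCycle G c cyc)
    (hclen : cyc.length = t + 1) (hshort : t + 1 ≤ ⌈(3 * (k : ℚ)) / 5⌉₊) :
    ∀ z : V, z ∉ cyc.support → G.Adj (cyc.getVert 0) z →
      c s(cyc.getVert 0, z) ∉
        {col : ℕ | ∃ i : ℕ,
          (i < ⌈(k : ℚ) / 5⌉₊ ∨ ((t + 1) - ⌈(k : ℚ) / 5⌉₊ ≤ i ∧ i ≤ t)) ∧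
          col = c s(cyc.getVert i, cyc.getVert (i + 1))} := by
  rintro z hz huz ⟨i, hi, heq⟩
  rw [Walk.getVert_zero] at huz heq
  have ha : 5 * ⌈(k : ℚ) / 5⌉₊ < k + 5 := by
    have := Nat.ceil_lt_add_one (a := (k : ℚ) / 5) (by positivity)
    have h : (5 * ⌈(k : ℚ) / 5⌉₊ : ℚ) < k + 5 := by linarith
    exact_mod_cast h
  have hb : 5 * ⌈(3 * (k : ℚ)) / 5⌉₊ < 3 * k + 5 := by
    have := Nat.ceil_lt_add_one (a := (3 * (k : ℚ)) / 5) (by positivity)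
    have h : (5 * ⌈(3 * (k : ℚ)) / 5⌉₊ : ℚ) < 3 * k + 5 := by linarith
    exact_mod_cast h
  generalize ⌈(k : ℚ) / 5⌉₊ = a at *
  generalize ⌈(3 * (k : ℚ)) / 5⌉₊ = b at *
  by_cases hit : i ≤ t
  · by_cases hia : i < a
    · exact color_ne_of_index_small hdeg hmax hcyc hclen hz huz hit (by omega) heq
    · -- The `i`-th edge is the `(t - i)`-th edge of the reversed cycle.
      have hrev : IsRainbowCycle G c cyc.reverse :=
        ⟨hcyc.1.reverse, by
          rw [Walk.edges_reverse, List.map_reverse, List.nodup_reverse]; exact hcyc.2⟩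
      refine color_ne_of_index_small hdeg hmax hrev (by simpa using hclen) (by simpa using hz)
        huz (i := t - i) (by omega) (by omega) ?_
      rw [heq, Walk.getVert_reverse, Walk.getVert_reverse, hclen,
        show t + 1 - (t - i) = i + 1 by omega, show t + 1 - (t - i + 1) = i by omega,
        Sym2.eq_swap]
  · -- Here `t + 1 ≤ i < ⌈k/5⌉`, so a rainbow path of length `t + 1` exists.
    obtain ⟨w, p, hp, hpl, -, -⟩ :=
      exists_outside_path hdeg hmax hcyc hclen hz (t + 1) (by right; omega)
    have := hmax _ _ p hp
    omega
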